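/- Let d ≥ 3 be an integer. Let f_{-1} = 1 and f_0, …, f_{d-1} be integers, and define f'_{-1} = 1 and f'_j = f_j - C(d+1, j+1) for 0 ≤ j ≤ d-1. With g_k(f) = Σ_{i=0}^{k} (-1)^{k-i} · C(d+2-i, d+2-k) · f_{i-1}, one has g_1(f') = g_1(f) - (d+1), and g_k(f') = g_k(f) + (-1)^k · C(d+2, k) for every 2 ≤ k ≤ ⌊(d+1)/2⌋. -/

import Mathlib

/-!
The number `g_k(f)` is the coefficient of `x ^ k` in `∑ f_{i-1} x ^ i (1 - x) ^ (d + 2 - i)`. For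
the `f`-vector `C(d + 1, i)` of a `d`-simplex this sum is `(x + (1 - x)) ^ (d + 1) (1 - x) = 1 - x`.
A handle addition subtracts the simplex from `f` except in the entry `f_{-1}`, so up to degree `d`
it changes the sum by `(1 - x) ^ (d + 2) - (1 - x)`.
-/

open Finset

/-- The `g`-numbers of a sequence `f : ℕ → ℤ` (with `f i` playing the role of `f_{i-1}`)
for a `d`-manifold: `g_k(f) = ∑_{i=0}^{k} (-1)^{k-i} C(d+2-i, d+2-k) f i`. -/
def gVec (d : ℕ) (f : ℕ → ℤ) (k : ℕ) : ℤ :=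
  ∑ i ∈ range (k + 1), (-1 : ℤ) ^ (k - i) * ((d + 2 - i).choose (d + 2 - k) : ℤ) * f i

section GPolynomial

open Polynomial

/-- The generating polynomial `∑ f_{i-1} x ^ i (1 - x) ^ (d + 2 - i)` of the `g`-numbers, with the
indexing convention of `gVec`. Unlike the `g`-polynomial of a polytope it is not truncated at degree
`⌊(d + 1) / 2⌋`; this is what lets the binomial theorem evaluate it in closed form. -/
noncomputable def gPolynomial (d : ℕ) (f : ℕ → ℤ) : ℤ[X] :=
  ∑ i ∈ range (d + 3), C (f i) * (X ^ i * (1 - X) ^ (d + 2 - i))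

lemma coeff_one_sub_X_pow {R : Type*} [CommRing R] (n k : ℕ) :
    ((1 - X : R[X]) ^ n).coeff k = (-1) ^ k * (n.choose k : R) := by
  have h_comp : (1 - X : R[X]) ^ n = ((1 + X) ^ n).comp (C (-1) * X) := by simp [sub_eq_add_neg]
  rw [h_comp, comp_C_mul_X_coeff, coeff_one_add_X_pow, mul_comm]

lemma coeff_gPolynomial {d k : ℕ} (hk : k ≤ d + 2) (f : ℕ → ℤ) :
    (gPolynomial d f).coeff k = gVec d f k := by
  have h_range : range (k + 1) ⊆ range (d + 3) := range_subset_range.2 (by omega)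
  simp only [gPolynomial, gVec, finsetSum_coeff, coeff_C_mul, coeff_X_pow_mul']
  rw [← sum_subset h_range fun i _ hi => by simp_all]
  refine sum_congr rfl fun i hi => ?_
  have hik : i ≤ k := by simpa [Nat.lt_succ_iff] using hi
  have h_symm : (d + 2 - i).choose (k - i) = (d + 2 - i).choose (d + 2 - k) :=
    Nat.choose_symm_of_eq_add (by omega)
  rw [if_pos hik, coeff_one_sub_X_pow, h_symm, mul_comm]

lemma gPolynomial_choose (d : ℕ) :
    gPolynomial d (fun i => ((d + 1).choose i : ℤ)) = 1 - X := by
  calc gPolynomial d (fun i => ((d + 1).choose i : ℤ))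
      = ∑ i ∈ range (d + 2), bernsteinPolynomial ℤ (d + 1) i * (1 - X) := by
        rw [gPolynomial, sum_range_succ, Nat.choose_succ_self, Nat.cast_zero, C_0, zero_mul,
          add_zero]
        refine sum_congr rfl fun i hi => ?_
        have h_exp : d + 2 - i = (d + 1 - i) + 1 := by have := mem_range.1 hi; omega
        rw [bernsteinPolynomial, h_exp, map_natCast]
        ring
    _ = 1 - X := by rw [← sum_mul, bernsteinPolynomial.sum, one_mul]

lemma gVec_choose {d k : ℕ} (hk : k ≤ d + 2) :
    gVec d (fun i => ((d + 1).choose i : ℤ)) k = (1 - X : ℤ[X]).coeff k := by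
  rw [← coeff_gPolynomial hk, gPolynomial_choose]

lemma gVec_single_zero {d k : ℕ} (hk : k ≤ d + 2) :
    gVec d (Pi.single 0 1) k = (-1) ^ k * ((d + 2).choose k : ℤ) := by
  rw [gVec, sum_eq_single_of_mem 0 (by simp) fun i _ hi => by simp [hi]]
  simp [Nat.choose_symm hk]

lemma gVec_congr (d : ℕ) {f f' : ℕ → ℤ} {k : ℕ} (h : ∀ i ≤ k, f' i = f i) :
    gVec d f' k = gVec d f k :=
  sum_congr rfl fun i hi => by rw [h i (Nat.lt_succ_iff.1 (mem_range.1 hi))]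

lemma gVec_add (d : ℕ) (f f' : ℕ → ℤ) (k : ℕ) :
    gVec d (f + f') k = gVec d f k + gVec d f' k := by
  simp only [gVec, Pi.add_apply, mul_add, sum_add_distrib]

lemma gVec_sub (d : ℕ) (f f' : ℕ → ℤ) (k : ℕ) :
    gVec d (f - f') k = gVec d f k - gVec d f' k := by
  simp only [gVec, Pi.sub_apply, mul_sub, sum_sub_distrib]

lemma gVec_handle_addition {d k : ℕ} (hk : k ≤ d + 2) {f f' : ℕ → ℤ} (h_zero : f' 0 = f 0)
    (h_succ : ∀ j < k, f' (j + 1) = f (j + 1) - ((d + 1).choose (j + 1) : ℤ)) :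
    gVec d f' k = gVec d f k - (1 - X : ℤ[X]).coeff k + (-1) ^ k * ((d + 2).choose k : ℤ) := by
  have h_entries : ∀ i ≤ k,
      f' i = (f - (fun i => ((d + 1).choose i : ℤ)) + Pi.single 0 1 : ℕ → ℤ) i := by
    rintro (_ | j) hj
    · simp [h_zero]
    · simp [h_succ j hj]
  rw [gVec_congr d h_entries, gVec_add, gVec_sub, gVec_choose hk, gVec_single_zero hk]

theorem g_vector_handle_addition_general (d : ℕ) (hd : 1 ≤ d) (f f' : ℕ → ℤ)
    (h_zero : f' 0 = f 0)
    (h_succ : ∀ j < d, f' (j + 1) = f (j + 1) - ((d + 1).choose (j + 1) : ℤ)) :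
    gVec d f' 1 = gVec d f 1 - (d + 1) ∧
      ∀ k, 2 ≤ k → k ≤ d →
        gVec d f' k = gVec d f k + (-1 : ℤ) ^ k * ((d + 2).choose k : ℤ) := by
  have h_gVec {k : ℕ} (hk : k ≤ d) :=
    gVec_handle_addition (hk.trans (by omega)) h_zero fun j hj => h_succ j (hj.trans_le hk)
  constructor
  · have h_coeff : (1 - X : ℤ[X]).coeff 1 = -1 := by simp [coeff_one]
    rw [h_gVec hd, h_coeff, Nat.choose_one_right]
    push_cast
    ring
  · intro k hk hkd
    have h_coeff : (1 - X : ℤ[X]).coeff k = 0 := by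
      simp [coeff_one, coeff_X, show k ≠ 0 by omega, show 1 ≠ k by omega]
    rw [h_gVec hkd, h_coeff, sub_zero]

end GPolynomial

/-- Effect of the handle addition operation on the `g`-vector: if `d ≥ 3`, `f 0 = 1 = f' 0`
(the `f_{-1}`-entries) and `f'_j = f_j - C(d+1, j+1)` for `0 ≤ j ≤ d-1`, then
`g₁(f') = g₁(f) - (d+1)` and `g_k(f') = g_k(f) + (-1)^k C(d+2, k)` for
`2 ≤ k ≤ ⌊(d+1)/2⌋`. -/
theorem g_vector_handle_addition (d : ℕ) (hd : 3 ≤ d) (f f' : ℕ → ℤ)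
    (hfm1 : f 0 = 1) (hf'm1 : f' 0 = 1)
    (hf' : ∀ j ≤ d - 1, f' (j + 1) = f (j + 1) - ((d + 1).choose (j + 1) : ℤ)) :
    gVec d f' 1 = gVec d f 1 - (d + 1) ∧
      ∀ k, 2 ≤ k → k ≤ (d + 1) / 2 →
        gVec d f' k = gVec d f k + (-1 : ℤ) ^ k * ((d + 2).choose k : ℤ) := by
  have ⟨h_one, h_two_le⟩ := g_vector_handle_addition_general d (by omega) f f'
    (hf'm1.trans hfm1.symm) fun j hj => hf' j (by omega)
  exact ⟨h_one, fun k hk hkd => h_two_le k hk (by omega)⟩
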